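/- arXiv:2407.00414 — 5 statements merged into one kernel-verified Lean document; each statement's English description precedes it below -/
import Mathlib

section
/- (Feasibility of the safety-stability filter.) Suppose (i) V satisfies the control Lyapunov condition: for every x ∈ ℝⁿ there exists u ∈ ℝᵐ with 𝓛_f V(x) + ⟨𝓛_g V(x), u⟩ + γ(x) ≤ 0; and (ii) b and V satisfy the relaxed compatibility condition: for every x ∈ ℝⁿ with b(x) = 0 there exists u ∈ ℝᵐ with 𝓛_f b(x) + ⟨𝓛_g b(x), u⟩ ≥ 0 and 𝓛_f V(x) + ⟨𝓛_g V(x), u⟩ ≤ 0. Then for every x ∈ ℝⁿ the feasible set of the filter quadratic program is nonempty: there exist u ∈ ℝᵐ and s ∈ ℝ with F₁(u, s) ≥ 0 and F₂(u) ≤ 0. -/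
open RealInnerProductSpace Matrix

noncomputable section

/-- Lie derivative of `h` along the drift `f`: `𝓛_f h (x) = ⟪∇h(x), f(x)⟫`. -/
def Lf {n : ℕ} (f : EuclideanSpace ℝ (Fin n) → EuclideanSpace ℝ (Fin n))
    (h : EuclideanSpace ℝ (Fin n) → ℝ) (x : EuclideanSpace ℝ (Fin n)) : ℝ :=
  ⟪gradient h x, f x⟫

/-- Lie derivative of `h` along the input matrix `g`: `𝓛_g h (x) = g(x)ᵀ ∇h(x) ∈ ℝᵐ`. -/
def Lg {n m : ℕ} (g : EuclideanSpace ℝ (Fin n) → Matrix (Fin n) (Fin m) ℝ)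
    (h : EuclideanSpace ℝ (Fin n) → ℝ) (x : EuclideanSpace ℝ (Fin n)) :
    EuclideanSpace ℝ (Fin m) :=
  Matrix.toEuclideanLin ((g x)ᵀ) (gradient h x)

/-- A continuous function `α : ℝ → ℝ` is extended class-K if it is strictly increasing
and vanishes at `0`. -/
def ExtendedClassK (α : ℝ → ℝ) : Prop :=
  Continuous α ∧ StrictMono α ∧ α 0 = 0

/-- A continuous function `γ : ℝⁿ → ℝ` is positive definite if `γ(0) = 0` and `γ(x) > 0`
for all `x ≠ 0`. -/
def PosDef {n : ℕ} (γ : EuclideanSpace ℝ (Fin n) → ℝ) : Prop :=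
  Continuous γ ∧ γ 0 = 0 ∧ ∀ x, x ≠ 0 → 0 < γ x

/-! Where `b x ≠ 0`, also `α (b x) ≠ 0`, so for any input a suitable slack `s` turns the safety
constraint into an equality; an input from the control Lyapunov condition then works, as `β ≤ 1`.
Where `b x = 0`, the slack has no effect, but `β 0 = 0` relaxes the stability constraint to the
one of the compatibility condition. -/

theorem ExtendedClassK.apply_eq_zero_iff {α : ℝ → ℝ} (hα : ExtendedClassK α) {r : ℝ} :
    α r = 0 ↔ r = 0 :=
  have ⟨_, hα_mono, hα_zero⟩ := hα
  hα_mono.injective.eq_iff' hα_zero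

theorem PosDef.nonneg {n : ℕ} {γ : EuclideanSpace ℝ (Fin n) → ℝ} (hγ : PosDef γ)
    (x : EuclideanSpace ℝ (Fin n)) : 0 ≤ γ x := by
  obtain ⟨-, hγ_zero, hγ_pos⟩ := hγ
  obtain rfl | hx := eq_or_ne x 0
  · exact hγ_zero.ge
  · exact (hγ_pos x hx).le

/-- Here `bDot x u` and `VDot x u` stand for the derivatives of `b` and `V` at the state `x`
along the dynamics with input `u`. -/
theorem filter_feasibility_general {X U : Type*} (bDot VDot : X → U → ℝ) (b γ : X → ℝ)
    (α β : ℝ → ℝ) (hα : ∀ r, α r = 0 → r = 0) (hβ0 : β 0 ≤ 0) (hβ1 : ∀ r, β r ≤ 1)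
    (hγ : ∀ x, 0 ≤ γ x)
    (hclf : ∀ x, b x ≠ 0 → ∃ u, VDot x u + γ x ≤ 0)
    (hrc : ∀ x, b x = 0 → ∃ u, 0 ≤ bDot x u ∧ VDot x u ≤ 0) (x : X) :
    ∃ (u : U) (s : ℝ), 0 ≤ bDot x u + s * α (b x) ∧ VDot x u + β (b x) * γ x ≤ 0 := by
  by_cases hbx : b x = 0
  · obtain ⟨u, hu_safe, hu_stable⟩ := hrc x hbx
    have hβγ : β (b x) * γ x ≤ 0 := mul_nonpos_of_nonpos_of_nonneg (hbx ▸ hβ0) (hγ x)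
    exact ⟨u, 0, by simpa using hu_safe, add_nonpos hu_stable hβγ⟩
  · obtain ⟨u, hu⟩ := hclf x hbx
    obtain ⟨s, hs : s * α (b x) = -bDot x u⟩ :=
      mul_right_surjective₀ (mt (hα (b x)) hbx) (-bDot x u)
    have hβγ : β (b x) * γ x ≤ γ x := mul_le_of_le_one_left (hγ x) (hβ1 (b x))
    exact ⟨u, s, by rw [hs, add_neg_cancel], by linarith⟩

/-- Feasibility of the safety-stability filter: if `V` satisfies the control Lyapunov
condition and `b`, `V` satisfy the relaxed compatibility condition, then for every state
the feasible set of the filter quadratic program is nonempty. -/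
theorem filter_feasibility {n m : ℕ}
    (f : EuclideanSpace ℝ (Fin n) → EuclideanSpace ℝ (Fin n))
    (g : EuclideanSpace ℝ (Fin n) → Matrix (Fin n) (Fin m) ℝ)
    (b V : EuclideanSpace ℝ (Fin n) → ℝ)
    (α β : ℝ → ℝ) (γ : EuclideanSpace ℝ (Fin n) → ℝ) (p : ℝ)
    (hb : Differentiable ℝ b) (hV : Differentiable ℝ V)
    (hp : 0 < p)
    (hα : ExtendedClassK α) (hβ : ExtendedClassK β) (hβ1 : ∀ r, β r ≤ 1)
    (hγ : PosDef γ)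
    -- (i) the control Lyapunov condition for `V`
    (hclf : ∀ x, ∃ u : EuclideanSpace ℝ (Fin m),
      Lf f V x + ⟪Lg g V x, u⟫ + γ x ≤ 0)
    -- (ii) relaxed compatibility of `b` and `V`
    (hrc : ∀ x, b x = 0 → ∃ u : EuclideanSpace ℝ (Fin m),
      0 ≤ Lf f b x + ⟪Lg g b x, u⟫ ∧ Lf f V x + ⟪Lg g V x, u⟫ ≤ 0) :
    ∀ x, ∃ (u : EuclideanSpace ℝ (Fin m)) (s : ℝ),
      0 ≤ Lf f b x + ⟪Lg g b x, u⟫ + s * α (b x) ∧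
      Lf f V x + ⟪Lg g V x, u⟫ + β (b x) * γ x ≤ 0 := by
  exact filter_feasibility_general (fun x u ↦ Lf f b x + ⟪Lg g b x, u⟫)
    (fun x u ↦ Lf f V x + ⟪Lg g V x, u⟫) b γ α β (fun _ ↦ hα.apply_eq_zero_iff.1)
    (hβ.apply_eq_zero_iff.2 rfl).le hβ1 hγ.nonneg (fun x _ ↦ hclf x) hrc
end
end

section
/- (Closed-form solution, CBF constraint active.) Fix x ∈ ℝⁿ and suppose F'_b(x) ≠ 0, F_b(x) ≤ 0, and F_V(x)·F'_b(x) − F_b(x)·⟨𝓛_g V(x), 𝓛_g b(x)⟩ < 0. Then the pair u* = π(x) − (F_b(x)/F'_b(x))·𝓛_g b(x), s* = 1 − F_b(x)·α(b(x))/(p·F'_b(x)) satisfies F₁(u*, s*) = 0 and F₂(u*) < 0, is feasible, and is the unique global minimizer of the safety-stability filter quadratic program at x. -/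
open RealInnerProductSpace Matrix

noncomputable section

/-- A continuous function `γ : ℝⁿ → ℝ` is positive definite if `γ(0) = 0` and `γ(x) > 0`
for all `x ≠ 0`. -/
def PosDefFun {n : ℕ} (γ : EuclideanSpace ℝ (Fin n) → ℝ) : Prop :=
  Continuous γ ∧ γ 0 = 0 ∧ ∀ x, x ≠ 0 → 0 < γ x

/-- The CBF constraint function `F₁(u, s)` of the safety-stability filter. -/
def F1 {n m : ℕ} (f : EuclideanSpace ℝ (Fin n) → EuclideanSpace ℝ (Fin n))
    (g : EuclideanSpace ℝ (Fin n) → Matrix (Fin n) (Fin m) ℝ)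
    (b : EuclideanSpace ℝ (Fin n) → ℝ) (α : ℝ → ℝ)
    (x : EuclideanSpace ℝ (Fin n)) (u : EuclideanSpace ℝ (Fin m)) (s : ℝ) : ℝ :=
  Lf f b x + ⟪Lg g b x, u⟫ + s * α (b x)

/-- The CLF constraint function `F₂(u)` of the safety-stability filter. -/
def F2 {n m : ℕ} (f : EuclideanSpace ℝ (Fin n) → EuclideanSpace ℝ (Fin n))
    (g : EuclideanSpace ℝ (Fin n) → Matrix (Fin n) (Fin m) ℝ)
    (V b : EuclideanSpace ℝ (Fin n) → ℝ) (β : ℝ → ℝ)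
    (γ : EuclideanSpace ℝ (Fin n) → ℝ)
    (x : EuclideanSpace ℝ (Fin n)) (u : EuclideanSpace ℝ (Fin m)) : ℝ :=
  Lf f V x + ⟪Lg g V x, u⟫ + β (b x) * γ x

/-- `F_b(x) = 𝓛_f b(x) + ⟨𝓛_g b(x), π(x)⟩ + α(b(x))`. -/
def Fb {n m : ℕ} (f : EuclideanSpace ℝ (Fin n) → EuclideanSpace ℝ (Fin n))
    (g : EuclideanSpace ℝ (Fin n) → Matrix (Fin n) (Fin m) ℝ)
    (b : EuclideanSpace ℝ (Fin n) → ℝ) (α : ℝ → ℝ)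
    (π : EuclideanSpace ℝ (Fin n) → EuclideanSpace ℝ (Fin m))
    (x : EuclideanSpace ℝ (Fin n)) : ℝ :=
  Lf f b x + ⟪Lg g b x, π x⟫ + α (b x)

/-- `F'_b(x) = ‖𝓛_g b(x)‖² + α(b(x))²/p`. -/
def FbP {n m : ℕ} (g : EuclideanSpace ℝ (Fin n) → Matrix (Fin n) (Fin m) ℝ)
    (b : EuclideanSpace ℝ (Fin n) → ℝ) (α : ℝ → ℝ) (p : ℝ)
    (x : EuclideanSpace ℝ (Fin n)) : ℝ :=
  ‖Lg g b x‖ ^ 2 + α (b x) ^ 2 / p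

/-- `F_V(x) = 𝓛_f V(x) + ⟨𝓛_g V(x), π(x)⟩ + β(b(x))·γ(x)`. -/
def FV {n m : ℕ} (f : EuclideanSpace ℝ (Fin n) → EuclideanSpace ℝ (Fin n))
    (g : EuclideanSpace ℝ (Fin n) → Matrix (Fin n) (Fin m) ℝ)
    (V b : EuclideanSpace ℝ (Fin n) → ℝ) (β : ℝ → ℝ)
    (γ : EuclideanSpace ℝ (Fin n) → ℝ)
    (π : EuclideanSpace ℝ (Fin n) → EuclideanSpace ℝ (Fin m))
    (x : EuclideanSpace ℝ (Fin n)) : ℝ :=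
  Lf f V x + ⟪Lg g V x, π x⟫ + β (b x) * γ x

/-- Objective function `J(u, s) = ½‖u − π(x)‖² + (p/2)(s − 1)²` of the filter QP. -/
def Jobj {n m : ℕ} (π : EuclideanSpace ℝ (Fin n) → EuclideanSpace ℝ (Fin m)) (p : ℝ)
    (x : EuclideanSpace ℝ (Fin n)) (u : EuclideanSpace ℝ (Fin m)) (s : ℝ) : ℝ :=
  (1 / 2) * ‖u - π x‖ ^ 2 + (p / 2) * (s - 1) ^ 2

/-!
The objective is half the squared distance from the reference `(π(x), 1)` in the inner product
`⟪u, v⟫ + p s t` of `(u, s)` and `(v, t)`. Dropping the inactive constraint `F₂ ≤ 0` leaves the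
projection of the reference onto the half-space `F₁ ≥ 0`, whose normal in this inner product is
`(𝓛_g b, α(b) / p)`. Moving along that normal until `F₁ = 0` gives `(u*, s*)`, and the law of
cosines shows that any other point of the half-space is strictly farther from the reference. The
remaining sign condition is exactly `F₂(u*) < 0`, so the relaxed minimizer is feasible for the full
problem.
-/

section WeightedDistance

variable {E : Type*} [NormedAddCommGroup E]

/-- Half the squared distance on `E × ℝ` for the inner product `⟪u, v⟫ + p s t` of `(u, s)` and
`(v, t)`; the filter objective is its value from the reference `(π(x), 1)`. -/
def weightedHalfSqDist (p : ℝ) (z₀ z : E × ℝ) : ℝ :=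
  (1 / 2) * ‖z.1 - z₀.1‖ ^ 2 + (p / 2) * (z.2 - z₀.2) ^ 2

theorem weightedHalfSqDist_nonneg {p : ℝ} (hp : 0 ≤ p) (z₀ z : E × ℝ) :
    0 ≤ weightedHalfSqDist p z₀ z := by
  unfold weightedHalfSqDist
  positivity

theorem weightedHalfSqDist_pos {p : ℝ} (hp : 0 < p) {z₀ z : E × ℝ} (hz : z ≠ z₀) :
    0 < weightedHalfSqDist p z₀ z := by
  unfold weightedHalfSqDist
  rcases not_and_or.mp (mt Prod.ext_iff.mpr hz) with hfst | hsnd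
  · have : 0 < ‖z.1 - z₀.1‖ := norm_sub_pos_iff.mpr hfst
    positivity
  · have : z.2 - z₀.2 ≠ 0 := sub_ne_zero.mpr hsnd
    positivity

variable [InnerProductSpace ℝ E]

theorem weightedHalfSqDist_law_of_cosines (p : ℝ) (z₀ z₁ z : E × ℝ) :
    weightedHalfSqDist p z₀ z = weightedHalfSqDist p z₀ z₁ + weightedHalfSqDist p z₁ z +
      (⟪z₁.1 - z₀.1, z.1 - z₁.1⟫ + p * (z₁.2 - z₀.2) * (z.2 - z₁.2)) := by
  have hnorm : ‖z.1 - z₀.1‖ ^ 2 =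
      ‖z₁.1 - z₀.1‖ ^ 2 + 2 * ⟪z₁.1 - z₀.1, z.1 - z₁.1⟫ + ‖z.1 - z₁.1‖ ^ 2 := by
    rw [← norm_add_sq_real, sub_add_sub_cancel']
  unfold weightedHalfSqDist
  rw [hnorm]
  ring

theorem weightedHalfSqDist_add_le_of_stationary {p μ w : ℝ} {a : E} {z₀ z₁ z : E × ℝ}
    (hμ : 0 ≤ μ) (hfst : z₁.1 - z₀.1 = μ • a) (hsnd : p * (z₁.2 - z₀.2) = μ * w)
    (hz : ⟪a, z₁.1⟫ + z₁.2 * w ≤ ⟪a, z.1⟫ + z.2 * w) :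
    weightedHalfSqDist p z₀ z₁ + weightedHalfSqDist p z₁ z ≤ weightedHalfSqDist p z₀ z := by
  have hcross : ⟪z₁.1 - z₀.1, z.1 - z₁.1⟫ + p * (z₁.2 - z₀.2) * (z.2 - z₁.2) =
      μ * ((⟪a, z.1⟫ + z.2 * w) - (⟪a, z₁.1⟫ + z₁.2 * w)) := by
    rw [hfst, hsnd, real_inner_smul_left, inner_sub_right]
    ring
  rw [weightedHalfSqDist_law_of_cosines p z₀ z₁ z, hcross]
  exact le_add_of_nonneg_right (mul_nonneg hμ (sub_nonneg.mpr hz))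

theorem inner_add_mul_along_weighted_normal (a u₀ : E) (w p s₀ μ : ℝ) :
    ⟪a, u₀ - μ • a⟫ + (s₀ - μ * w / p) * w =
      ⟪a, u₀⟫ + s₀ * w - μ * (‖a‖ ^ 2 + w ^ 2 / p) := by
  rw [inner_sub_right, real_inner_smul_right, real_inner_self_eq_norm_sq]
  ring

theorem filter_solution_cbf_active_general {F₁ : E → ℝ → ℝ} {F₂ : E → ℝ} {a k u₀ : E}
    {c d w p q s₀ : ℝ}
    (hF₁ : ∀ u s, F₁ u s = c + ⟪a, u⟫ + s * w) (hF₂ : ∀ u, F₂ u = d + ⟪k, u⟫)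
    (hq : q = ‖a‖ ^ 2 + w ^ 2 / p) (hp : 0 < p) (hq_ne : q ≠ 0) (href : F₁ u₀ s₀ ≤ 0)
    (hcond : F₂ u₀ * q - F₁ u₀ s₀ * ⟪k, a⟫ < 0)
    {ustar : E} {sstar : ℝ} (hustar : ustar = u₀ - (F₁ u₀ s₀ / q) • a)
    (hsstar : sstar = s₀ - F₁ u₀ s₀ * w / (p * q)) :
    F₁ ustar sstar = 0 ∧ F₂ ustar < 0 ∧ (0 ≤ F₁ ustar sstar ∧ F₂ ustar ≤ 0) ∧
    ∀ u s, 0 ≤ F₁ u s → F₂ u ≤ 0 →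
      weightedHalfSqDist p (u₀, s₀) (ustar, sstar) ≤ weightedHalfSqDist p (u₀, s₀) (u, s) ∧
      ((u, s) ≠ (ustar, sstar) →
        weightedHalfSqDist p (u₀, s₀) (ustar, sstar) < weightedHalfSqDist p (u₀, s₀) (u, s)) := by
  have hq_pos : 0 < q := lt_of_le_of_ne (by rw [hq]; positivity) hq_ne.symm
  have hF₁_star : F₁ ustar sstar = 0 := by
    have hs : sstar = s₀ - F₁ u₀ s₀ / q * w / p := by rw [hsstar]; ring
    rw [hF₁, add_assoc, hustar, hs, inner_add_mul_along_weighted_normal, ← hq,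
      div_mul_cancel₀ _ hq_ne, hF₁]
    ring
  have hF₂_star : F₂ ustar < 0 := by
    have hquot : F₂ ustar = (F₂ u₀ * q - F₁ u₀ s₀ * ⟪k, a⟫) / q := by
      rw [hF₂, hF₂, hustar, inner_sub_right, real_inner_smul_right]
      field_simp
      ring
    exact hquot ▸ div_neg_of_neg_of_pos hcond hq_pos
  refine ⟨hF₁_star, hF₂_star, ⟨hF₁_star.ge, hF₂_star.le⟩, fun u s hu _ => ?_⟩
  have hgrowth : weightedHalfSqDist p (u₀, s₀) (ustar, sstar) +
      weightedHalfSqDist p (ustar, sstar) (u, s) ≤ weightedHalfSqDist p (u₀, s₀) (u, s) := by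
    -- `-F₁ u₀ s₀ / q` is the Lagrange multiplier of the constraint `0 ≤ F₁`.
    refine weightedHalfSqDist_add_le_of_stationary (μ := -F₁ u₀ s₀ / q) (a := a) (w := w)
      (div_nonneg (neg_nonneg.mpr href) hq_pos.le) ?_ ?_ ?_
    · simp only [hustar, sub_sub_cancel_left, neg_div, neg_smul]
    · simp only [hsstar, sub_sub_cancel_left]
      field_simp
    · linarith [hF₁ u s, hF₁ ustar sstar]
  exact ⟨by linarith [weightedHalfSqDist_nonneg hp.le (ustar, sstar) (u, s)],
    fun hne => by linarith [weightedHalfSqDist_pos hp hne]⟩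

end WeightedDistance

theorem F1_reference_eq_Fb {n m : ℕ}
    (f : EuclideanSpace ℝ (Fin n) → EuclideanSpace ℝ (Fin n))
    (g : EuclideanSpace ℝ (Fin n) → Matrix (Fin n) (Fin m) ℝ)
    (b : EuclideanSpace ℝ (Fin n) → ℝ) (α : ℝ → ℝ)
    (π : EuclideanSpace ℝ (Fin n) → EuclideanSpace ℝ (Fin m))
    (x : EuclideanSpace ℝ (Fin n)) :
    F1 f g b α x (π x) 1 = Fb f g b α π x := by
  rw [F1, Fb, one_mul]

/-- Closed-form solution of the filter QP when only the CBF constraint is active: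
under the stated sign conditions, `u* = π(x) − (F_b/F'_b)·𝓛_g b(x)` and
`s* = 1 − F_b·α(b(x))/(p·F'_b)` give the unique global minimizer, with
`F₁(u*, s*) = 0` and `F₂(u*) < 0`. -/
theorem filter_solution_cbf_active {n m : ℕ}
    (f : EuclideanSpace ℝ (Fin n) → EuclideanSpace ℝ (Fin n))
    (g : EuclideanSpace ℝ (Fin n) → Matrix (Fin n) (Fin m) ℝ)
    (b V : EuclideanSpace ℝ (Fin n) → ℝ)
    (α β : ℝ → ℝ) (γ : EuclideanSpace ℝ (Fin n) → ℝ)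
    (π : EuclideanSpace ℝ (Fin n) → EuclideanSpace ℝ (Fin m)) (p : ℝ)
    (hb : Differentiable ℝ b) (hV : Differentiable ℝ V)
    (hp : 0 < p)
    (hα : ExtendedClassK α) (hβ : ExtendedClassK β) (hβ1 : ∀ r, β r ≤ 1)
    (hγ : PosDefFun γ)
    (x : EuclideanSpace ℝ (Fin n))
    (hFbP : FbP g b α p x ≠ 0) (hFb : Fb f g b α π x ≤ 0)
    (hcond : FV f g V b β γ π x * FbP g b α p x -
      Fb f g b α π x * ⟪Lg g V x, Lg g b x⟫ < 0)
    (ustar : EuclideanSpace ℝ (Fin m)) (sstar : ℝ)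
    (hustar : ustar = π x - (Fb f g b α π x / FbP g b α p x) • Lg g b x)
    (hsstar : sstar = 1 - Fb f g b α π x * α (b x) / (p * FbP g b α p x)) :
    F1 f g b α x ustar sstar = 0 ∧
    F2 f g V b β γ x ustar < 0 ∧
    (0 ≤ F1 f g b α x ustar sstar ∧ F2 f g V b β γ x ustar ≤ 0) ∧
    (∀ (u : EuclideanSpace ℝ (Fin m)) (s : ℝ),
      0 ≤ F1 f g b α x u s → F2 f g V b β γ x u ≤ 0 →
        Jobj π p x ustar sstar ≤ Jobj π p x u s ∧
        ((u, s) ≠ (ustar, sstar) → Jobj π p x ustar sstar < Jobj π p x u s)) := by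
  rw [← F1_reference_eq_Fb] at hFb hcond hustar hsstar
  exact filter_solution_cbf_active_general (fun _ _ => rfl) (fun _ => add_right_comm _ _ _) rfl
    hp hFbP hFb hcond hustar hsstar
end
end

section
/- (Closed-form solution, CLF constraint active.) Fix x ∈ ℝⁿ and suppose 𝓛_g V(x) ≠ 0, F_V(x) ≥ 0, and F_b(x)·‖𝓛_g V(x)‖² − F_V(x)·⟨𝓛_g b(x), 𝓛_g V(x)⟩ > 0. Then the pair u* = π(x) − (F_V(x)/‖𝓛_g V(x)‖²)·𝓛_g V(x), s* = 1 satisfies F₂(u*) = 0 and F₁(u*, 1) > 0, is feasible, and is the unique global minimizer of the safety-stability filter quadratic program at x. -/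
open RealInnerProductSpace Matrix

noncomputable section

/-!
Drop the safety constraint. The slack then costs nothing at `s = 1`, and the remaining problem is
to project the reference input onto the half-space `F₂ ≤ 0`. Since the reference satisfies
`F₂ ≥ 0`, the projection is the foot of the perpendicular on the hyperplane `F₂ = 0`, and the
obtuse angle there makes the cost of any competitor exceed the optimal cost by at least the
quadratic cost recentred at the foot. The sign condition involving `F_b` says exactly that the
dropped constraint is strict at this minimizer, so it is the minimizer of the full program.
-/

section FilterCost

variable {E : Type*} [NormedAddCommGroup E] {p : ℝ}

/-- The objective of the filter quadratic program, with reference input `z`, slack weight `p` and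
reference slack `1`. -/
def filterCost (p : ℝ) (z u : E) (s : ℝ) : ℝ :=
  (1 / 2) * ‖u - z‖ ^ 2 + (p / 2) * (s - 1) ^ 2

lemma filterCost_nonneg (hp : 0 ≤ p) (z u : E) (s : ℝ) : 0 ≤ filterCost p z u s := by
  rw [filterCost]
  positivity

lemma filterCost_pos (hp : 0 < p) {z u : E} {s : ℝ} (hus : (u, s) ≠ (z, 1)) :
    0 < filterCost p z u s := by
  rw [filterCost]
  rcases eq_or_ne u z with rfl | hu
  · have hs : s - 1 ≠ 0 := sub_ne_zero.mpr fun h => hus (h ▸ rfl)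
    positivity
  · have hu' : u - z ≠ 0 := sub_ne_zero.mpr hu
    positivity

end FilterCost

section AffineFunctional

variable {E : Type*} [NormedAddCommGroup E] [InnerProductSpace ℝ E]
  {φ ψ : E → ℝ} {v w u y z : E} {p : ℝ}

/-- `φ` is an affine functional whose gradient is the constant vector `v`. -/
def HasAffineGradient (φ : E → ℝ) (v : E) : Prop :=
  ∀ y z, φ z = φ y + ⟪v, z - y⟫

/-- The foot of the perpendicular from `z` to the hyperplane `φ = 0`, where `φ` is an affine
functional with gradient `v ≠ 0`; for `v = 0` the formula returns `z`. -/
def hyperplaneProj (φ : E → ℝ) (v z : E) : E :=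
  z - (φ z / ‖v‖ ^ 2) • v

namespace HasAffineGradient

lemma const_add_inner_add_const (c d : ℝ) (v : E) :
    HasAffineGradient (fun u => c + ⟪v, u⟫ + d) v := by
  intro y z
  rw [inner_sub_right]
  ring

lemma apply_hyperplaneProj (hψ : HasAffineGradient ψ w) :
    ψ (hyperplaneProj φ v z) = ψ z - φ z / ‖v‖ ^ 2 * ⟪w, v⟫ := by
  rw [hψ z, hyperplaneProj, sub_sub_cancel_left, inner_neg_right, real_inner_smul_right,
    sub_eq_add_neg]

lemma apply_hyperplaneProj_eq_zero (hφ : HasAffineGradient φ v) (hv : v ≠ 0) :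
    φ (hyperplaneProj φ v z) = 0 := by
  rw [hφ.apply_hyperplaneProj, real_inner_self_eq_norm_sq,
    div_mul_cancel₀ _ (by positivity), sub_self]

lemma apply_hyperplaneProj_pos_iff (hψ : HasAffineGradient ψ w) (hv : v ≠ 0) :
    0 < ψ (hyperplaneProj φ v z) ↔ 0 < ψ z * ‖v‖ ^ 2 - φ z * ⟪w, v⟫ := by
  have hv_sq : 0 < ‖v‖ ^ 2 := by positivity
  have h_scaled : ψ (hyperplaneProj φ v z) * ‖v‖ ^ 2 = ψ z * ‖v‖ ^ 2 - φ z * ⟪w, v⟫ := by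
    rw [hψ.apply_hyperplaneProj]
    field_simp
  rw [← h_scaled, mul_pos_iff_of_pos_right hv_sq]

lemma inner_sub_hyperplaneProj_nonneg (hφ : HasAffineGradient φ v) (hv : v ≠ 0)
    (hz : 0 ≤ φ z) (hu : φ u ≤ 0) :
    0 ≤ ⟪u - hyperplaneProj φ v z, hyperplaneProj φ v z - z⟫ := by
  have h_normal : ⟪v, u - hyperplaneProj φ v z⟫ ≤ 0 := by
    rwa [hφ (hyperplaneProj φ v z), hφ.apply_hyperplaneProj_eq_zero hv, zero_add] at hu
  have h_step : hyperplaneProj φ v z - z = -(φ z / ‖v‖ ^ 2) • v := by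
    rw [hyperplaneProj, sub_sub_cancel_left, neg_smul]
  rw [h_step, real_inner_smul_right, real_inner_comm]
  exact mul_nonneg_of_nonpos_of_nonpos (neg_nonpos.mpr (by positivity)) h_normal

end HasAffineGradient

lemma filterCost_add_le_of_inner_nonneg (h : 0 ≤ ⟪u - y, y - z⟫) (s : ℝ) :
    filterCost p z y 1 + filterCost p y u s ≤ filterCost p z u s := by
  have h_expand : ‖u - z‖ ^ 2 = ‖u - y‖ ^ 2 + 2 * ⟪u - y, y - z⟫ + ‖y - z‖ ^ 2 := by
    rw [← norm_add_sq_real, sub_add_sub_cancel]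
  simp only [filterCost, h_expand]
  linarith

/-- Here `φ` is the stability constraint and `ψ` the safety constraint at slack `1`; optimality
holds among all pairs meeting the stability constraint alone. -/
theorem filter_solution_clf_active_general (hφ : HasAffineGradient φ v)
    (hψ : HasAffineGradient ψ w) (hp : 0 < p) (hz : 0 ≤ φ z)
    (hcond : 0 < ψ z * ‖v‖ ^ 2 - φ z * ⟪w, v⟫) :
    φ (hyperplaneProj φ v z) = 0 ∧
    0 < ψ (hyperplaneProj φ v z) ∧
    ∀ (u : E) (s : ℝ), φ u ≤ 0 →
      filterCost p z (hyperplaneProj φ v z) 1 ≤ filterCost p z u s ∧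
      ((u, s) ≠ (hyperplaneProj φ v z, 1) →
        filterCost p z (hyperplaneProj φ v z) 1 < filterCost p z u s) := by
  have hv : v ≠ 0 := by
    rintro rfl
    simp at hcond
  refine ⟨hφ.apply_hyperplaneProj_eq_zero hv, (hψ.apply_hyperplaneProj_pos_iff hv).mpr hcond,
    fun u s hu => ?_⟩
  have h_growth := filterCost_add_le_of_inner_nonneg (p := p)
    (hφ.inner_sub_hyperplaneProj_nonneg hv hz hu) s
  exact ⟨(le_add_of_nonneg_right (filterCost_nonneg hp.le _ u s)).trans h_growth,
    fun hne => (lt_add_of_pos_right _ (filterCost_pos hp hne)).trans_le h_growth⟩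

end AffineFunctional

section FilterConstraints

variable {n m : ℕ} (f : EuclideanSpace ℝ (Fin n) → EuclideanSpace ℝ (Fin n))
  (g : EuclideanSpace ℝ (Fin n) → Matrix (Fin n) (Fin m) ℝ)

lemma hasAffineGradient_F1 (b : EuclideanSpace ℝ (Fin n) → ℝ) (α : ℝ → ℝ)
    (x : EuclideanSpace ℝ (Fin n)) (s : ℝ) :
    HasAffineGradient (fun u => F1 f g b α x u s) (Lg g b x) :=
  .const_add_inner_add_const _ _ _

lemma hasAffineGradient_F2 (V b : EuclideanSpace ℝ (Fin n) → ℝ) (β : ℝ → ℝ)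
    (γ : EuclideanSpace ℝ (Fin n) → ℝ) (x : EuclideanSpace ℝ (Fin n)) :
    HasAffineGradient (F2 f g V b β γ x) (Lg g V x) :=
  .const_add_inner_add_const _ _ _

lemma F1_ref_one_eq_Fb (b : EuclideanSpace ℝ (Fin n) → ℝ) (α : ℝ → ℝ)
    (π : EuclideanSpace ℝ (Fin n) → EuclideanSpace ℝ (Fin m)) (x : EuclideanSpace ℝ (Fin n)) :
    F1 f g b α x (π x) 1 = Fb f g b α π x := by
  rw [F1, Fb, one_mul]

end FilterConstraints

/-- Closed-form solution of the filter QP when only the CLF constraint is active: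
under the stated sign conditions, `u* = π(x) − (F_V/‖𝓛_g V(x)‖²)·𝓛_g V(x)` and
`s* = 1` give the unique global minimizer, with `F₂(u*) = 0` and `F₁(u*, 1) > 0`. -/
theorem filter_solution_clf_active {n m : ℕ}
    (f : EuclideanSpace ℝ (Fin n) → EuclideanSpace ℝ (Fin n))
    (g : EuclideanSpace ℝ (Fin n) → Matrix (Fin n) (Fin m) ℝ)
    (b V : EuclideanSpace ℝ (Fin n) → ℝ)
    (α β : ℝ → ℝ) (γ : EuclideanSpace ℝ (Fin n) → ℝ)
    (π : EuclideanSpace ℝ (Fin n) → EuclideanSpace ℝ (Fin m)) (p : ℝ)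
    (hb : Differentiable ℝ b) (hV : Differentiable ℝ V)
    (hp : 0 < p)
    (hα : ExtendedClassK α) (hβ : ExtendedClassK β) (hβ1 : ∀ r, β r ≤ 1)
    (hγ : PosDefFun γ)
    (x : EuclideanSpace ℝ (Fin n))
    (hLgV : Lg g V x ≠ 0) (hFV : 0 ≤ FV f g V b β γ π x)
    (hcond : 0 < Fb f g b α π x * ‖Lg g V x‖ ^ 2 -
      FV f g V b β γ π x * ⟪Lg g b x, Lg g V x⟫)
    (ustar : EuclideanSpace ℝ (Fin m))
    (hustar : ustar = π x - (FV f g V b β γ π x / ‖Lg g V x‖ ^ 2) • Lg g V x) :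
    F2 f g V b β γ x ustar = 0 ∧
    0 < F1 f g b α x ustar 1 ∧
    (0 ≤ F1 f g b α x ustar 1 ∧ F2 f g V b β γ x ustar ≤ 0) ∧
    (∀ (u : EuclideanSpace ℝ (Fin m)) (s : ℝ),
      0 ≤ F1 f g b α x u s → F2 f g V b β γ x u ≤ 0 →
        Jobj π p x ustar 1 ≤ Jobj π p x u s ∧
        ((u, s) ≠ (ustar, 1) → Jobj π p x ustar 1 < Jobj π p x u s)) := by
  subst hustar
  obtain ⟨h_active, h_safe, h_min⟩ := filter_solution_clf_active_general
    (hasAffineGradient_F2 f g V b β γ x) (hasAffineGradient_F1 f g b α x 1) hp hFV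
    (F1_ref_one_eq_Fb f g b α π x ▸ hcond)
  exact ⟨h_active, h_safe, ⟨h_safe.le, h_active.le⟩, fun u s _ => h_min u s⟩
end
end

section
/- (Equilibria lie on the boundary with both constraints active.) Fix x ∈ ℝⁿ with x ≠ 0 and b(x) ≥ 0, and suppose (u, s) ∈ ℝᵐ × ℝ satisfies the filter constraints F₁(u, s) ≥ 0 and F₂(u) ≤ 0 and x is an equilibrium of the closed loop, i.e., f(x) + g(x)u = 0. Then b(x) = 0, F₁(u, s) = 0, and F₂(u) = 0; that is, every nonzero closed-loop equilibrium in the set {b ≥ 0} lies on its zero level set {b = 0} and has both the CBF and the CLF constraints active. -/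
open RealInnerProductSpace Matrix

noncomputable section

/-!
At an equilibrium the vector field `f + g u` vanishes, so every function has zero derivative along
the closed loop. The filter constraints then reduce to `F₁ = s α(b(x))` and `F₂ = β(b(x)) γ(x)`.
As `γ(x) > 0`, the inequality `F₂ ≤ 0` gives `β(b(x)) ≤ 0`, which together with `b(x) ≥ 0` forces
`b(x) = 0`, and both constraint values vanish.
-/

theorem inner_toEuclideanLin_transpose_left {ι κ : Type*} [Fintype ι] [Fintype κ]
    [DecidableEq ι] [DecidableEq κ] (A : Matrix ι κ ℝ) (v : EuclideanSpace ℝ ι)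
    (u : EuclideanSpace ℝ κ) :
    ⟪Matrix.toEuclideanLin Aᵀ v, u⟫ = ⟪v, Matrix.toEuclideanLin A u⟫ := by
  rw [← Matrix.conjTranspose_eq_transpose_of_trivial,
    Matrix.toEuclideanLin_conjTranspose_eq_adjoint, LinearMap.adjoint_inner_left]

theorem ExtendedClassK.map_zero {α : ℝ → ℝ} (hα : ExtendedClassK α) : α 0 = 0 :=
  hα.2.2

theorem ExtendedClassK.pos {α : ℝ → ℝ} (hα : ExtendedClassK α) {r : ℝ} (hr : 0 < r) : 0 < α r :=
  hα.map_zero.symm.trans_lt (hα.2.1 hr)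

section ClosedLoop

variable {n m : ℕ} {f : EuclideanSpace ℝ (Fin n) → EuclideanSpace ℝ (Fin n)}
  {g : EuclideanSpace ℝ (Fin n) → Matrix (Fin n) (Fin m) ℝ}
  {x : EuclideanSpace ℝ (Fin n)} {u : EuclideanSpace ℝ (Fin m)}

theorem Lf_add_inner_Lg (h : EuclideanSpace ℝ (Fin n) → ℝ) :
    Lf f h x + ⟪Lg g h x, u⟫ = ⟪gradient h x, f x + Matrix.toEuclideanLin (g x) u⟫ := by
  rw [Lf, Lg, inner_toEuclideanLin_transpose_left, inner_add_right]

theorem Lf_add_inner_Lg_eq_zero_of_equilibrium (h : EuclideanSpace ℝ (Fin n) → ℝ)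
    (heq : f x + Matrix.toEuclideanLin (g x) u = 0) : Lf f h x + ⟪Lg g h x, u⟫ = 0 := by
  rw [Lf_add_inner_Lg, heq, inner_zero_right]

theorem F1_eq_mul_of_equilibrium (b : EuclideanSpace ℝ (Fin n) → ℝ) (α : ℝ → ℝ) (s : ℝ)
    (heq : f x + Matrix.toEuclideanLin (g x) u = 0) : F1 f g b α x u s = s * α (b x) := by
  rw [F1, Lf_add_inner_Lg_eq_zero_of_equilibrium b heq, zero_add]

theorem F2_eq_mul_of_equilibrium (V b : EuclideanSpace ℝ (Fin n) → ℝ) (β : ℝ → ℝ)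
    (γ : EuclideanSpace ℝ (Fin n) → ℝ) (heq : f x + Matrix.toEuclideanLin (g x) u = 0) :
    F2 f g V b β γ x u = β (b x) * γ x := by
  rw [F2, Lf_add_inner_Lg_eq_zero_of_equilibrium V heq, zero_add]

theorem equilibria_on_boundary_general {b V : EuclideanSpace ℝ (Fin n) → ℝ}
    {α β : ℝ → ℝ} {γ : EuclideanSpace ℝ (Fin n) → ℝ} {s : ℝ}
    (_hb : DifferentiableAt ℝ b x) (_hV : DifferentiableAt ℝ V x)
    (hα0 : α 0 = 0) (hβ0 : β 0 = 0) (hβpos : ∀ r, 0 < r → 0 < β r)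
    (hγx : 0 < γ x) (hbx : 0 ≤ b x) (hF2 : F2 f g V b β γ x u ≤ 0)
    (heq : f x + Matrix.toEuclideanLin (g x) u = 0) :
    b x = 0 ∧ F1 f g b α x u s = 0 ∧ F2 f g V b β γ x u = 0 := by
  rw [F2_eq_mul_of_equilibrium V b β γ heq] at hF2 ⊢
  rw [F1_eq_mul_of_equilibrium b α s heq]
  have hβx : β (b x) ≤ 0 := nonpos_of_mul_nonpos_left hF2 hγx
  have hb0 : b x = 0 := hbx.eq_of_not_lt' fun hpos ↦ (hβpos _ hpos).not_ge hβx
  exact ⟨hb0, by rw [hb0, hα0, mul_zero], by rw [hb0, hβ0, zero_mul]⟩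

end ClosedLoop

/-- Equilibria lie on the boundary with both constraints active: if `x ≠ 0`,
`b(x) ≥ 0`, `(u, s)` is feasible for the filter, and `x` is an equilibrium of the
closed loop (`f(x) + g(x)u = 0`), then `b(x) = 0`, `F₁(u, s) = 0` and `F₂(u) = 0`. -/
theorem equilibria_on_boundary {n m : ℕ}
    (f : EuclideanSpace ℝ (Fin n) → EuclideanSpace ℝ (Fin n))
    (g : EuclideanSpace ℝ (Fin n) → Matrix (Fin n) (Fin m) ℝ)
    (b V : EuclideanSpace ℝ (Fin n) → ℝ)
    (α β : ℝ → ℝ) (γ : EuclideanSpace ℝ (Fin n) → ℝ)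
    (π : EuclideanSpace ℝ (Fin n) → EuclideanSpace ℝ (Fin m)) (p : ℝ)
    (hb : Differentiable ℝ b) (hV : Differentiable ℝ V)
    (hp : 0 < p)
    (hα : ExtendedClassK α) (hβ : ExtendedClassK β) (hβ1 : ∀ r, β r ≤ 1)
    (hγ : PosDefFun γ)
    (x : EuclideanSpace ℝ (Fin n)) (hx : x ≠ 0) (hbx : 0 ≤ b x)
    (u : EuclideanSpace ℝ (Fin m)) (s : ℝ)
    (hF1 : 0 ≤ F1 f g b α x u s) (hF2 : F2 f g V b β γ x u ≤ 0)
    (heq : f x + Matrix.toEuclideanLin (g x) u = 0) :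
    b x = 0 ∧ F1 f g b α x u s = 0 ∧ F2 f g V b β γ x u = 0 :=
  equilibria_on_boundary_general (hb x) (hV x) hα.map_zero hβ.map_zero (fun _ ↦ hβ.pos)
    (hγ.2.2 x hx) hbx hF2 heq
end
end

section
/- (Incompatibility of the benchmark CLF and CBF.) Consider the system ẋ = x + u on ℝ² with V(x) = x₁² + x₂² and b(x) = x₁² + (x₂ − 4)² − 4. For every x₂ > 4, at the state x = (0, x₂) there exists no u = (u₁, u₂) ∈ ℝ² satisfying both the CBF constraint ⟨∇b(x), x + u⟩ + b(x) ≥ 0 and the CLF constraint ⟨∇V(x), x + u⟩ + V(x) ≤ 0; equivalently, there is no u₂ ∈ ℝ satisfying both (2x₂ − 8)u₂ + 3x₂² − 16x₂ + 12 ≥ 0 and 2x₂u₂ + 3x₂² ≤ 0. In particular, V and b are not compatible with α = id and γ = V. -/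
/-!
Write `V x = ‖x‖²` and `b x = ‖x - c‖² - d`. If the centre `c` of the obstacle lies on the segment
from the origin to `x`, then `x - c = s • x` with `s ∈ [0, 1]`, so `∇b x = s • ∇V x`. The CLF
constraint bounds the velocity `w` by `2⟪x, w⟫ ≤ -‖x‖²`, and then the left-hand side of the CBF
constraint is at most `-s (1 - s) ‖x‖² - d < 0`. The drift and the input enter only through `w`.
-/

open RealInnerProductSpace

noncomputable section

/-- The benchmark CLF `V(x) = x₁² + x₂²`. -/
def Vbench : EuclideanSpace ℝ (Fin 2) → ℝ := fun x => x 0 ^ 2 + x 1 ^ 2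

/-- The benchmark CBF `b(x) = x₁² + (x₂ − 4)² − 4`. -/
def bbench : EuclideanSpace ℝ (Fin 2) → ℝ := fun x => x 0 ^ 2 + (x 1 - 4) ^ 2 - 4

section Module

variable {𝕜 E : Type*} [Field 𝕜] [LinearOrder 𝕜] [IsStrictOrderedRing 𝕜] [AddCommGroup E]
  [Module 𝕜 E]

lemma smul_mem_segment_zero_smul {a b : 𝕜} (ha : 0 ≤ a) (hab : a ≤ b) (x : E) :
    a • x ∈ segment 𝕜 0 (b • x) := by
  have h : a ∈ segment 𝕜 0 b := Icc_subset_segment ⟨ha, hab⟩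
  simpa using (image_segment 𝕜 (LinearMap.toSpanSingleton 𝕜 E x).toAffineMap 0 b).subset
    (Set.mem_image_of_mem _ h)

lemma exists_sub_eq_smul_of_mem_segment_zero {c x : E} (hc : c ∈ segment 𝕜 0 x) :
    ∃ s ∈ Set.Icc (0 : 𝕜) 1, x - c = s • x := by
  obtain ⟨s, t, hs, ht, hst, rfl⟩ := hc
  refine ⟨s, ⟨hs, by linarith⟩, ?_⟩
  rw [smul_zero, zero_add, sub_eq_iff_eq_add, ← add_smul, hst, one_smul]

end Module

section PreHilbert

variable {E : Type*} [NormedAddCommGroup E] [InnerProductSpace ℝ E]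

lemma two_inner_sub_add_norm_sq_nonpos {c x w : E} (hc : c ∈ segment ℝ 0 x)
    (hw : 2 * ⟪x, w⟫ + ‖x‖ ^ 2 ≤ 0) : 2 * ⟪x - c, w⟫ + ‖x - c‖ ^ 2 ≤ 0 := by
  obtain ⟨s, ⟨hs₀, hs₁⟩, hs⟩ := exists_sub_eq_smul_of_mem_segment_zero hc
  calc 2 * ⟪x - c, w⟫ + ‖x - c‖ ^ 2
      = s * (2 * ⟪x, w⟫ + ‖x‖ ^ 2) - s * (1 - s) * ‖x‖ ^ 2 := by
        rw [hs, real_inner_smul_left, norm_smul, Real.norm_of_nonneg hs₀]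
        ring
    _ ≤ 0 := by
        have hclf : s * (2 * ⟪x, w⟫ + ‖x‖ ^ 2) ≤ 0 := mul_nonpos_of_nonneg_of_nonpos hs₀ hw
        have hgap : 0 ≤ s * (1 - s) * ‖x‖ ^ 2 :=
          mul_nonneg (mul_nonneg hs₀ (sub_nonneg.2 hs₁)) (sq_nonneg _)
        linarith

end PreHilbert

section Hilbert

variable {E : Type*} [NormedAddCommGroup E] [InnerProductSpace ℝ E] [CompleteSpace E]

lemma hasGradientAt_norm_sub_sq_sub_const (c x : E) (d : ℝ) :
    HasGradientAt (fun z ↦ ‖z - c‖ ^ 2 - d) ((2 : ℝ) • (x - c)) x := by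
  rw [hasGradientAt_iff_hasFDerivAt]
  refine (((hasFDerivAt_id x).sub_const c).norm_sq.sub_const d).congr_fderiv ?_
  ext w
  simp [mul_sub]

lemma hasGradientAt_norm_sq (x : E) : HasGradientAt (fun z ↦ ‖z‖ ^ 2) ((2 : ℝ) • x) x := by
  simpa only [sub_zero] using hasGradientAt_norm_sub_sq_sub_const 0 x 0

theorem benchmark_incompatible_general {c x : E} {d : ℝ} (hd : 0 < d) (hc : c ∈ segment ℝ 0 x) :
    ¬ ∃ w : E,
      0 ≤ ⟪gradient (fun z ↦ ‖z - c‖ ^ 2 - d) x, w⟫ + (‖x - c‖ ^ 2 - d) ∧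
      ⟪gradient (fun z ↦ ‖z‖ ^ 2) x, w⟫ + ‖x‖ ^ 2 ≤ 0 := by
  rintro ⟨w, hb, hV⟩
  rw [(hasGradientAt_norm_sub_sq_sub_const c x d).gradient, real_inner_smul_left] at hb
  rw [(hasGradientAt_norm_sq x).gradient, real_inner_smul_left] at hV
  linarith [two_inner_sub_add_norm_sq_nonpos hc hV]

end Hilbert

lemma Vbench_eq_norm_sq : Vbench = fun z ↦ ‖z‖ ^ 2 := by
  ext z
  simp [Vbench, EuclideanSpace.real_norm_sq_eq]

lemma bbench_eq_norm_sub_sq_sub : bbench = fun z ↦ ‖z - !₂[0, 4]‖ ^ 2 - 4 := by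
  ext z
  simp [bbench, EuclideanSpace.real_norm_sq_eq]

lemma vec_zero_mem_segment_zero {a : ℝ} (ha : 0 ≤ a) {x : EuclideanSpace ℝ (Fin 2)}
    (hx₀ : x 0 = 0) (hx₁ : a ≤ x 1) : !₂[0, a] ∈ segment ℝ 0 x := by
  have hx : x = x 1 • !₂[0, 1] := by
    ext i
    fin_cases i <;> simp [hx₀]
  have hc : !₂[0, a] = a • !₂[(0 : ℝ), 1] := by
    ext i
    fin_cases i <;> simp
  rw [hx, hc]
  exact smul_mem_segment_zero_smul ha hx₁ _

lemma not_exists_velocity_bbench_Vbench {x : EuclideanSpace ℝ (Fin 2)} (hx₀ : x 0 = 0)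
    (hx₁ : 4 ≤ x 1) :
    ¬ ∃ w : EuclideanSpace ℝ (Fin 2),
      0 ≤ ⟪gradient bbench x, w⟫ + bbench x ∧ ⟪gradient Vbench x, w⟫ + Vbench x ≤ 0 := by
  rw [bbench_eq_norm_sub_sq_sub, Vbench_eq_norm_sq]
  exact benchmark_incompatible_general four_pos (vec_zero_mem_segment_zero zero_le_four hx₀ hx₁)

lemma not_exists_scalar_input {x₂ : ℝ} (hx : 4 ≤ x₂) :
    ¬ ∃ u₂ : ℝ,
      0 ≤ (2 * x₂ - 8) * u₂ + 3 * x₂ ^ 2 - 16 * x₂ + 12 ∧ 2 * x₂ * u₂ + 3 * x₂ ^ 2 ≤ 0 := by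
  rintro ⟨u₂, hb, hV⟩
  have hc : (4 : ℝ) ∈ segment ℝ 0 x₂ := Icc_subset_segment ⟨zero_le_four, hx⟩
  -- With velocity `x₂ + u₂`, these are the constraints for `E = ℝ` and `c = d = 4`.
  have hclf : 2 * ⟪x₂, x₂ + u₂⟫ + ‖x₂‖ ^ 2 ≤ 0 := by
    rw [Real.inner_apply, Real.norm_eq_abs, sq_abs]
    linarith
  have hsub := two_inner_sub_add_norm_sq_nonpos hc hclf
  rw [Real.norm_eq_abs, sq_abs, Real.inner_apply] at hsub
  linarith

/-- Incompatibility of the benchmark CLF and CBF for the system `ẋ = x + u`: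
at every state `(0, x₂)` with `x₂ > 4` no input satisfies both the CBF constraint
(with `α = id`) and the CLF constraint (with `γ = V`); equivalently the two scalar
inequalities in `u₂` are jointly infeasible; in particular no controller renders `V`
and `b` compatible. -/
theorem benchmark_incompatible :
    (∀ x : EuclideanSpace ℝ (Fin 2), x 0 = 0 → 4 < x 1 →
      ¬ ∃ u : EuclideanSpace ℝ (Fin 2),
        0 ≤ ⟪gradient bbench x, x + u⟫ + bbench x ∧
        ⟪gradient Vbench x, x + u⟫ + Vbench x ≤ 0) ∧
    (∀ x₂ : ℝ, 4 < x₂ →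
      ¬ ∃ u₂ : ℝ,
        0 ≤ (2 * x₂ - 8) * u₂ + 3 * x₂ ^ 2 - 16 * x₂ + 12 ∧
        2 * x₂ * u₂ + 3 * x₂ ^ 2 ≤ 0) ∧
    ¬ ∃ u : EuclideanSpace ℝ (Fin 2) → EuclideanSpace ℝ (Fin 2),
      ∀ x, 0 ≤ ⟪gradient bbench x, x + u x⟫ + bbench x ∧
        ⟪gradient Vbench x, x + u x⟫ + Vbench x ≤ 0 := by
  refine ⟨fun x hx₀ hx₁ ⟨u, hu⟩ ↦ not_exists_velocity_bbench_Vbench hx₀ hx₁.le ⟨x + u, hu⟩,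
    fun x₂ hx ↦ not_exists_scalar_input hx.le, ?_⟩
  rintro ⟨u, hu⟩
  -- `b (0, 7) = 5 > 0`, so the incompatibility already occurs at a safe state.
  exact not_exists_velocity_bbench_Vbench (by simp) (by norm_num) ⟨_, hu !₂[0, 7]⟩
end
end
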